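/- Let k be a positive integer, let G be a finite simple graph, let I ⊆ V(G), let P be an I-connected path decomposition of G of width at most k−1 that is S-structured for a bottleneck S, and let S' be a bottleneck with β(S,P) < α(S',P) (i.e., the interval of S lies strictly before the interval of S'). Then there exists an I-connected path decomposition P' of G with width(P') ≤ width(P) that is both S-structured and S'-structured and satisfies β(S,P') < α(S',P'). -/

import Mathlib

/-!
Write `B` for the union of the in-branches of `S'`; it is attached to the rest of the graph only
through `S'`, and its vertices occur only in bags of the interval `[α, β]` of `S'`, all of which
contain `S'`. Choose a bag `t` in `[α, β]` with the fewest vertices outside `B`. In the new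
decomposition the vertices outside `B` follow the old bags but stall at `t` for `β - α + 1`
additional steps, and `B` runs through its bags exactly during that period (`stall`). By the choice
of `t` no bag gets too large, everything outside `B` waits in the new interval of `S'`, and nothing
changes before `α`, in particular in the interval of `S` (`transfer`, `exists_structured`).

Stalling delays `B`, so connectivity of the prefixes to `I` could be lost when some vertices of `S'`
reach `I` only through `B`. This cannot happen if `S'` is already contained in the bag before `α`
(`igood_mix`), and `exists_refinement` arranges for that by inserting bags right before `α`: build up
the bag at `α` vertex by vertex, keeping the prefix connected to `I`. Either all of `S'` can be
added before any vertex of `B`, or some in-branch enters before all of `S'` is present. In the latter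
case that branch is no longer an in-branch, and the procedure is repeated; it ends because a
bottleneck always has an in-branch (`exists_inBranch`): all other branches meet one of two fixed
bags, which have at most `2k` vertices in total.

Connectivity to `I` is handled through `IGood`, which speaks about neighbour-closed subsets instead
of components.
-/


open SimpleGraph

variable {V : Type*}

/-- `N_G(Y)`: the set of vertices outside `Y` having a neighbor in `Y`. -/
def nbhdSet (G : SimpleGraph V) (Y : Set V) : Set V :=
  {v | v ∉ Y ∧ ∃ u ∈ Y, G.Adj u v}

/-- `C` is a connected component of the subgraph of `G` induced by `U`. -/
def IsCompIn (G : SimpleGraph V) (U C : Set V) : Prop :=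
  C.Nonempty ∧ C ⊆ U ∧ (G.induce C).Connected ∧
    ∀ u ∈ C, ∀ v ∈ U, G.Adj u v → v ∈ C

/-- `C` is a connected component of `G - S`. -/
def IsCompOf (G : SimpleGraph V) (S C : Set V) : Prop :=
  IsCompIn G Sᶜ C

/-- `C` is an `S`-branch: a connected component of `G - S` with `N_G(C) = S`. -/
def IsBranch (G : SimpleGraph V) (S C : Set V) : Prop :=
  IsCompOf G S C ∧ nbhdSet G C = S

/-- `S` is a bottleneck (for the width parameter `k`): a nonempty set with
at least `2k+1` `S`-branches. -/
def IsBottleneck (G : SimpleGraph V) (k : ℕ) (S : Set V) : Prop :=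
  S.Nonempty ∧ 2 * k + 1 ≤ {C : Set V | IsBranch G S C}.ncard

/-- `(X 0, …, X (l-1))` is a path decomposition of `G`. -/
def IsPathDecomp (G : SimpleGraph V) (l : ℕ) (X : ℕ → Set V) : Prop :=
  (∀ v, ∃ i < l, v ∈ X i) ∧
  (∀ u v, G.Adj u v → ∃ i < l, u ∈ X i ∧ v ∈ X i) ∧
  (∀ i j m, i ≤ j → j ≤ m → m < l → X i ∩ X m ⊆ X j)

/-- The width of a path decomposition: the maximum bag size minus one. -/
noncomputable def pdWidth (l : ℕ) (X : ℕ → Set V) : ℕ :=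
  ((Finset.range l).sup fun i => (X i).ncard) - 1

/-- The set of indices of bags meeting the vertex set `C`. -/
def supp (l : ℕ) (X : ℕ → Set V) (C : Set V) : Set ℕ :=
  {t | t < l ∧ (C ∩ X t).Nonempty}

/-- `a(C)`: the first index of a bag meeting `C`. -/
noncomputable def firstIdx (l : ℕ) (X : ℕ → Set V) (C : Set V) : ℕ :=
  sInf (supp l X C)

/-- `b(C)`: the last index of a bag meeting `C`. -/
noncomputable def lastIdx (l : ℕ) (X : ℕ → Set V) (C : Set V) : ℕ :=
  sSup (supp l X C)

/-- `C` is an in-branch of `S` with respect to the decomposition: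
an `S`-branch with `S ⊆ X (a C)` and `S ⊆ X (b C)`. -/
def IsInBranch (G : SimpleGraph V) (l : ℕ) (X : ℕ → Set V) (S C : Set V) : Prop :=
  IsBranch G S C ∧ S ⊆ X (firstIdx l X C) ∧ S ⊆ X (lastIdx l X C)

/-- `α(S)`: the minimum of `a(H)` over in-branches `H` of `S`. -/
noncomputable def botStart (G : SimpleGraph V) (l : ℕ) (X : ℕ → Set V) (S : Set V) : ℕ :=
  sInf {i | ∃ C, IsInBranch G l X S C ∧ i = firstIdx l X C}

/-- `β(S)`: the maximum of `b(H)` over in-branches `H` of `S`. -/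
noncomputable def botEnd (G : SimpleGraph V) (l : ℕ) (X : ℕ → Set V) (S : Set V) : ℕ :=
  sSup {i | ∃ C, IsInBranch G l X S C ∧ i = lastIdx l X C}

/-- The interval `I(S,P) = [α(S), β(S)]` of a bottleneck `S`. -/
noncomputable def botInterval (G : SimpleGraph V) (l : ℕ) (X : ℕ → Set V) (S : Set V) : Set ℕ :=
  Set.Icc (botStart G l X S) (botEnd G l X S)

/-- A pre-branch of `S`. -/
def IsPreBranch (G : SimpleGraph V) (l : ℕ) (X : ℕ → Set V) (S C : Set V) : Prop :=
  IsBranch G S C ∧ ¬ IsInBranch G l X S C ∧ firstIdx l X C < botStart G l X S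

/-- A post-branch of `S`. -/
def IsPostBranch (G : SimpleGraph V) (l : ℕ) (X : ℕ → Set V) (S C : Set V) : Prop :=
  IsBranch G S C ∧ ¬ IsInBranch G l X S C ∧
    botStart G l X S ≤ firstIdx l X C ∧ botEnd G l X S < lastIdx l X C

/-- `C` waits in the interval `[i, j]` of the decomposition. -/
def WaitsIn (X : ℕ → Set V) (C : Set V) (i j : ℕ) : Prop :=
  ∀ t, i ≤ t → t ≤ j → C ∩ X t = C ∩ X i

/-- The decomposition is `S`-structured: every component of `G - S` that is not an
`S`-branch, and every pre- or post-branch of `S`, waits in `I(S,P)`. -/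
def IsStructured (G : SimpleGraph V) (l : ℕ) (X : ℕ → Set V) (S : Set V) : Prop :=
  ∀ C : Set V,
    ((IsCompOf G S C ∧ ¬ IsBranch G S C) ∨ IsPreBranch G l X S C ∨ IsPostBranch G l X S C) →
    WaitsIn X C (botStart G l X S) (botEnd G l X S)

/-- The decomposition is `I`-connected: every connected component of the subgraph
induced by any prefix of bags contains a vertex of `I`. -/
def IsIConn (G : SimpleGraph V) (l : ℕ) (X : ℕ → Set V) (I : Set V) : Prop :=
  ∀ i < l, ∀ C : Set V, IsCompIn G {v | ∃ j ≤ i, v ∈ X j} C → (C ∩ I).Nonempty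

/-! ### Connected sets and components -/

/-- A connected set `C` is contained in every set that meets `C` and is closed under taking
neighbours inside `C`. -/
lemma subset_of_closed {G : SimpleGraph V} {C D : Set V} (hC : (G.induce C).Connected)
    {x : V} (hxC : x ∈ C) (hxD : x ∈ D)
    (hD : ∀ u ∈ C, u ∈ D → ∀ v ∈ C, G.Adj u v → v ∈ D) : C ⊆ D := by
  intro y hy
  obtain ⟨w⟩ := hC.preconnected ⟨x, hxC⟩ ⟨y, hy⟩
  have key : ∀ (p q : C), (G.induce C).Walk p q → (p : V) ∈ D → (q : V) ∈ D := by
    intro p q w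
    induction w with
    | nil => exact id
    | cons h _ ih => exact fun hp => ih (hD _ (Subtype.property _) hp _ (Subtype.property _) h)
  exact key _ _ w hxD

lemma comp_eq {G : SimpleGraph V} {S C D : Set V} (hC : IsCompOf G S C) (hD : IsCompOf G S D)
    {x : V} (hxC : x ∈ C) (hxD : x ∈ D) : C = D := by
  apply Set.Subset.antisymm
  · exact subset_of_closed hC.2.2.1 hxC hxD fun u _ huD v hv h => hD.2.2.2 u huD v (hC.2.1 hv) h
  · exact subset_of_closed hD.2.2.1 hxD hxC fun u _ huC v hv h => hC.2.2.2 u huC v (hD.2.1 hv) h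

lemma exists_comp [Finite V] (G : SimpleGraph V) (U : Set V) {x : V} (hx : x ∈ U) :
    ∃ C, IsCompIn G U C ∧ x ∈ C := by
  have hfin : {C : Set V | C ⊆ U ∧ x ∈ C ∧ (G.induce C).Connected}.Finite := Set.toFinite _
  obtain ⟨C, hC⟩ := hfin.exists_maximal
    ⟨{x}, by simpa using hx, rfl, by simp⟩
  refine ⟨C, ⟨⟨x, hC.1.2.1⟩, hC.1.1, hC.1.2.2, ?_⟩, hC.1.2.1⟩
  intro u hu v hv huv
  have h2 : (G.induce (C ∪ {u, v})).Connected :=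
    induce_union_connected hC.1.2.2.preconnected
      (induce_pair_connected_of_adj huv).preconnected ⟨u, hu, by simp⟩
  have := hC.2 (y := C ∪ {u, v})
    ⟨Set.union_subset hC.1.1 (by rintro y (rfl | rfl); exacts [hC.1.1 hu, hv]),
      Or.inl hC.1.2.1, h2⟩ Set.subset_union_left
  exact this (by simp)

/-! ### `I`-good sets -/

/-- Every nonempty subset of `U` that is closed under taking neighbours in `U` meets `I`;
equivalently, every component of `G[U]` meets `I`. -/
def IGood (G : SimpleGraph V) (I U : Set V) : Prop :=
  ∀ C ⊆ U, C.Nonempty → (∀ u ∈ C, ∀ v ∈ U, G.Adj u v → v ∈ C) → (C ∩ I).Nonempty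

lemma igood_iff [Finite V] {G : SimpleGraph V} {I U : Set V} :
    IGood G I U ↔ ∀ C, IsCompIn G U C → (C ∩ I).Nonempty := by
  constructor
  · exact fun h C hC => h C hC.2.1 hC.1 hC.2.2.2
  · rintro h C hCU ⟨x, hx⟩ hcl
    obtain ⟨D, hD, hxD⟩ := exists_comp G U (hCU hx)
    have hDC : D ⊆ C :=
      subset_of_closed hD.2.2.1 hxD hx fun u _ huC v hv huv => hcl u huC v (hD.2.1 hv) huv
    exact (h D hD).mono (Set.inter_subset_inter_left _ hDC)

/-- If `M` and `N` are `I`-good and `N` is not contained in `M`, then some vertex of `N \ M` can be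
added to `M` with the result still `I`-good. -/
lemma igood_extend {G : SimpleGraph V} {I M N : Set V} (hM : IGood G I M) (hN : IGood G I N)
    (hne : (N \ M).Nonempty) : ∃ v ∈ N \ M, IGood G I (insert v M) := by
  by_cases hI : ((N \ M) ∩ I).Nonempty
  · obtain ⟨v, hv, hvI⟩ := hI
    refine ⟨v, hv, fun C hC hCne hcl => ?_⟩
    by_cases hvC : v ∈ C
    · exact ⟨v, hvC, hvI⟩
    · refine hM C (fun x hx => ?_) hCne fun u hu w hw h => hcl u hu w (Or.inr hw) h
      rcases hC hx with rfl | h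
      exacts [absurd hx hvC, h]
  · -- otherwise `N \ M` misses `I`, so it is not closed in `N` and has a neighbour in `M`
    have : ∃ d ∈ N \ M, ∃ m ∈ M, G.Adj d m := by
      by_contra hcon
      push Not at hcon
      refine hI (hN _ Set.sdiff_subset hne fun u hu v hv huv => ⟨hv, fun hvM => ?_⟩)
      exact hcon u hu v hvM huv
    obtain ⟨d, hd, m, hm, hdm⟩ := this
    refine ⟨d, hd, fun C hC hCne hcl => ?_⟩
    have hne' : (C ∩ M).Nonempty := by
      obtain ⟨x, hx⟩ := hCne
      rcases hC hx with rfl | h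
      · exact ⟨m, hcl _ hx m (Or.inr hm) hdm, hm⟩
      · exact ⟨x, hx, h⟩
    refine (hM (C ∩ M) Set.inter_subset_right hne' ?_).mono
      (Set.inter_subset_inter_left _ Set.inter_subset_left)
    exact fun u hu w hw h => ⟨hcl u hu.1 w (Or.inr hw) h, hw⟩

/-- Running the vertices of `B` on a different clock preserves `I`-goodness, as long as the set
`S` separating `B` from the rest is covered beforehand by an `I`-good set `A` avoiding `B`. -/
lemma igood_mix {G : SimpleGraph V} {I P Q A B S : Set V} (hP : IGood G I P) (hQ : IGood G I Q)
    (hA : IGood G I A) (hSA : S ⊆ A) (hAB : ∀ v ∈ A, v ∉ B)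
    (hB : ∀ u ∈ B, ∀ v ∉ B, G.Adj u v → v ∈ S)
    (h : A ⊆ P ∨ ((∀ v ∈ Q, v ∉ B) ∧ (∀ v ∈ P, v ∉ B))) :
    IGood G I ((P \ B) ∪ (Q ∩ B)) := by
  rcases h with hAP | ⟨hQB, hPB⟩
  · have hAM : A ⊆ (P \ B) ∪ (Q ∩ B) := fun v hv => Or.inl ⟨hAP hv, hAB v hv⟩
    intro C hC hCne hcl
    by_cases hCS : (C ∩ S).Nonempty
    · obtain ⟨s, hsC, hsS⟩ := hCS
      refine (hA (C ∩ A) Set.inter_subset_right ⟨s, hsC, hSA hsS⟩ ?_).mono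
        (Set.inter_subset_inter_left _ Set.inter_subset_left)
      exact fun u hu v hv huv => ⟨hcl u hu.1 v (hAM hv) huv, hv⟩
    have hCS' : ∀ v ∈ C, v ∉ S := fun v hv hvS => hCS ⟨v, hv, hvS⟩
    by_cases hCB : (C ∩ B).Nonempty
    · refine (hQ (C ∩ B) ?_ hCB ?_).mono (Set.inter_subset_inter_left _ Set.inter_subset_left)
      · rintro v ⟨hv, hvB⟩
        rcases hC hv with h | h
        exacts [absurd hvB h.2, h.1]
      · rintro u ⟨huC, huB⟩ v hvQ huv
        by_cases hvB : v ∈ B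
        · exact ⟨hcl u huC v (Or.inr ⟨hvQ, hvB⟩) huv, hvB⟩
        · have hvS := hB u huB v hvB huv
          exact absurd hvS (hCS' v (hcl u huC v (hAM (hSA hvS)) huv))
    · have hCB' : ∀ v ∈ C, v ∉ B := fun v hv hvB => hCB ⟨v, hv, hvB⟩
      refine hP C (fun v hv => ?_) hCne fun u hu v hv huv => ?_
      · rcases hC hv with h | h
        exacts [h.1, absurd h.2 (hCB' v hv)]
      · by_cases hvB : v ∈ B
        · exact absurd (hB v hvB u (hCB' u hu) huv.symm) (hCS' u hu)
        · exact hcl u hu v (Or.inl ⟨hv, hvB⟩) huv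
  · have : (P \ B) ∪ (Q ∩ B) = P := by
      ext v
      constructor
      · rintro (h | h)
        exacts [h.1, absurd h.2 (hQB v h.1)]
      · exact fun h => Or.inl ⟨h, hPB v h⟩
    rw [this]
    exact hP

/-! ### First and last indices -/

section Idx

variable {G : SimpleGraph V} {l : ℕ} {X : ℕ → Set V} {S C : Set V}

lemma firstIdx_mem (hP : IsPathDecomp G l X) (hC : C.Nonempty) :
    firstIdx l X C ∈ supp l X C := by
  obtain ⟨v, hv⟩ := hC
  obtain ⟨i, hi, hvi⟩ := hP.1 v
  exact Nat.sInf_mem ⟨i, hi, v, hv, hvi⟩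

lemma supp_bdd : BddAbove (supp l X C) := ⟨l, fun _ h => h.1.le⟩

lemma lastIdx_mem (hP : IsPathDecomp G l X) (hC : C.Nonempty) :
    lastIdx l X C ∈ supp l X C := by
  obtain ⟨v, hv⟩ := hC
  obtain ⟨i, hi, hvi⟩ := hP.1 v
  exact Nat.sSup_mem ⟨i, hi, v, hv, hvi⟩ supp_bdd

lemma firstIdx_le {t : ℕ} (h : t ∈ supp l X C) : firstIdx l X C ≤ t := Nat.sInf_le h

lemma le_lastIdx {t : ℕ} (h : t ∈ supp l X C) : t ≤ lastIdx l X C := le_csSup supp_bdd h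

lemma botStart_le (h : IsInBranch G l X S C) : botStart G l X S ≤ firstIdx l X C :=
  Nat.sInf_le ⟨C, h, rfl⟩

lemma exists_botStart (h : ∃ C, IsInBranch G l X S C) :
    ∃ C, IsInBranch G l X S C ∧ botStart G l X S = firstIdx l X C := by
  obtain ⟨C, hC⟩ := h
  exact Nat.sInf_mem (s := {i | ∃ C, IsInBranch G l X S C ∧ i = firstIdx l X C}) ⟨_, C, hC, rfl⟩

lemma inBranch_last_bdd (hP : IsPathDecomp G l X) :
    BddAbove {i | ∃ C, IsInBranch G l X S C ∧ i = lastIdx l X C} := by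
  refine ⟨l, ?_⟩
  rintro _ ⟨C, hC, rfl⟩
  exact (lastIdx_mem hP hC.1.1.1).1.le

lemma le_botEnd (hP : IsPathDecomp G l X) (h : IsInBranch G l X S C) :
    lastIdx l X C ≤ botEnd G l X S :=
  le_csSup (inBranch_last_bdd hP) ⟨C, h, rfl⟩

lemma exists_botEnd (hP : IsPathDecomp G l X) (h : ∃ C, IsInBranch G l X S C) :
    ∃ C, IsInBranch G l X S C ∧ botEnd G l X S = lastIdx l X C := by
  obtain ⟨C, hC⟩ := h
  exact Nat.sSup_mem (s := {i | ∃ C, IsInBranch G l X S C ∧ i = lastIdx l X C})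
    ⟨_, C, hC, rfl⟩ (inBranch_last_bdd hP)

lemma first_le_last (hP : IsPathDecomp G l X) (hC : C.Nonempty) :
    firstIdx l X C ≤ lastIdx l X C :=
  firstIdx_le (lastIdx_mem hP hC)

lemma botStart_le_botEnd (hP : IsPathDecomp G l X) (h : ∃ C, IsInBranch G l X S C) :
    botStart G l X S ≤ botEnd G l X S := by
  obtain ⟨C, hC⟩ := h
  exact (botStart_le hC).trans ((first_le_last hP hC.1.1.1).trans (le_botEnd hP hC))

lemma botEnd_lt (hP : IsPathDecomp G l X) (h : ∃ C, IsInBranch G l X S C) :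
    botEnd G l X S < l := by
  obtain ⟨C, hC, h⟩ := exists_botEnd hP h
  exact h ▸ (lastIdx_mem hP hC.1.1.1).1

/-- The bottleneck `S` lies in every bag of its interval. -/
lemma subset_bag (hP : IsPathDecomp G l X) (h : ∃ C, IsInBranch G l X S C) {t : ℕ}
    (h1 : botStart G l X S ≤ t) (h2 : t ≤ botEnd G l X S) : S ⊆ X t := by
  intro s hs
  obtain ⟨C, hC, hCe⟩ := exists_botStart h
  obtain ⟨D, hD, hDe⟩ := exists_botEnd hP h
  refine hP.2.2 _ t _ h1 h2 (botEnd_lt hP h) ⟨?_, ?_⟩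
  · rw [hCe]; exact hC.2.1 hs
  · rw [hDe]; exact hD.2.2 hs

/-- A connected set occupies an interval of bags. -/
lemma conn_interval (hP : IsPathDecomp G l X) (hC : (G.induce C).Connected) {i t j : ℕ}
    (hi : i ∈ supp l X C) (hj : j ∈ supp l X C) (hit : i ≤ t) (htj : t ≤ j) :
    t ∈ supp l X C := by
  refine ⟨htj.trans_lt hj.1, ?_⟩
  by_contra hne
  have hno : ∀ v ∈ C, v ∉ X t := fun v hv hvt => hne ⟨v, hv, hvt⟩
  obtain ⟨x, hxC, hxi⟩ := hi.2
  obtain ⟨y, hyC, hyj⟩ := hj.2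
  have hsub : C ⊆ {v | ∃ m ≤ t, v ∈ X m} := by
    refine subset_of_closed hC hxC ⟨i, hit, hxi⟩ ?_
    rintro u huC ⟨m, hm, hum⟩ v hvC huv
    obtain ⟨r, hr, hur, hvr⟩ := hP.2.1 u v huv
    rcases le_total r t with h | h
    · exact ⟨r, h, hvr⟩
    · exact absurd (hP.2.2 m t r hm h hr ⟨hum, hur⟩) (hno u huC)
  obtain ⟨m, hm, hym⟩ := hsub hyC
  exact hno y hyC (hP.2.2 m t j hm htj hj.1 ⟨hym, hyj⟩)

/-- If all `S`-branches meet a set `Z`, there are at most `|Z|` of them, since they are disjoint. -/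
lemma ncard_branches_le [Finite V] [Nonempty V] (Z : Set V)
    (h : ∀ C, IsBranch G S C → (C ∩ Z).Nonempty) :
    {C : Set V | IsBranch G S C}.ncard ≤ Z.ncard := by
  choose! g hg using h
  refine Set.ncard_le_ncard_of_injOn g (fun C hC => (hg C hC).2) ?_ (Set.toFinite _)
  intro C hC D hD hCD
  exact comp_eq hC.1 hD.1 (hg C hC).1 (hCD ▸ (hg D hD).1)

/-- With bags of size at most `k`, a bottleneck has an in-branch: let `p` be the last first index
and `q` the first last index over the vertices of `S`; every branch that is not an in-branch meets
`X p ∪ X q`, which has at most `2k` vertices. -/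
lemma exists_inBranch [Finite V] {k : ℕ} (hP : IsPathDecomp G l X)
    (hk : ∀ i < l, (X i).ncard ≤ k) (hS : IsBottleneck G k S) : ∃ C, IsInBranch G l X S C := by
  by_contra hno
  push Not at hno
  have : Nonempty V := ⟨hS.1.some⟩
  obtain ⟨s1, hs1, hmax⟩ :=
    Set.exists_max_image S (fun s => firstIdx l X {s}) (Set.toFinite _) hS.1
  obtain ⟨s2, hs2, hmin⟩ :=
    Set.exists_min_image S (fun s => lastIdx l X {s}) (Set.toFinite _) hS.1
  set p := firstIdx l X {s1} with hp
  set q := lastIdx l X {s2} with hq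
  have hpl : p < l := (firstIdx_mem hP (Set.singleton_nonempty s1)).1
  have hql : q < l := (lastIdx_mem hP (Set.singleton_nonempty s2)).1
  have hall : ∀ t, p ≤ t → t ≤ q → S ⊆ X t := by
    intro t h1 h2 s hs
    have ha := firstIdx_mem hP (Set.singleton_nonempty s)
    have hb := lastIdx_mem hP (Set.singleton_nonempty s)
    have ha2 : s ∈ X (firstIdx l X {s}) := by simpa using ha.2
    have hb2 : s ∈ X (lastIdx l X {s}) := by simpa using hb.2
    exact hP.2.2 _ t _ ((hmax s hs).trans h1) (h2.trans (hmin s hs)) hb.1 ⟨ha2, hb2⟩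
  have hadj : ∀ C, IsBranch G S C → ∀ s ∈ S, ∃ i ∈ supp l X C, s ∈ X i := by
    intro C hC s hs
    rw [← hC.2] at hs
    obtain ⟨-, u, hu, hus⟩ := hs
    obtain ⟨i, hi, h1, h2⟩ := hP.2.1 u s hus
    exact ⟨i, ⟨hi, u, hu, h1⟩, h2⟩
  have hmeet : ∀ C, IsBranch G S C → (C ∩ (X p ∪ X q)).Nonempty := by
    intro C hC
    obtain ⟨i, hi, hsi⟩ := hadj C hC s1 hs1
    obtain ⟨j, hj, hsj⟩ := hadj C hC s2 hs2
    have hpi : p ≤ i := firstIdx_le ⟨hi.1, s1, rfl, hsi⟩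
    have hjq : j ≤ q := le_lastIdx ⟨hj.1, s2, rfl, hsj⟩
    have hcon := hC.1.2.2.1
    have hfm := firstIdx_mem hP hC.1.1
    have hlm := lastIdx_mem hP hC.1.1
    have hfj := firstIdx_le hj
    have hil := le_lastIdx hi
    have hfl := first_le_last hP hC.1.1
    have viaP : p ∈ supp l X C → (C ∩ (X p ∪ X q)).Nonempty := fun h =>
      h.2.mono (Set.inter_subset_inter_right _ Set.subset_union_left)
    have viaQ : q ∈ supp l X C → (C ∩ (X p ∪ X q)).Nonempty := fun h =>
      h.2.mono (Set.inter_subset_inter_right _ Set.subset_union_right)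
    by_cases h1 : firstIdx l X C < p
    · exact viaP (conn_interval hP hcon hfm hi h1.le hpi)
    by_cases h2 : q < lastIdx l X C
    · exact viaQ (conn_interval hP hcon hj hlm hjq h2.le)
    push Not at h1 h2
    exact absurd ⟨hC, hall _ h1 (hfl.trans h2), hall _ (h1.trans hfl) h2⟩ (hno C)
  have h1 := ncard_branches_le _ hmeet
  have h2 := Set.ncard_union_le (X p) (X q)
  have h3 := hk p hpl
  have h4 := hk q hql
  have h5 := hS.2
  omega

end Idx

/-! ### Reindexing a path decomposition -/

/-- First and last indices of `C` are compatible with a monotone reindexing `f` that maps the bags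
of `X'` meeting `C` onto the bags of `X` meeting `C`. -/
lemma clock {G : SimpleGraph V} {l l' : ℕ} {X X' : ℕ → Set V} (hP : IsPathDecomp G l X)
    (hP' : IsPathDecomp G l' X') {C : Set V} (hC : C.Nonempty) {f : ℕ → ℕ} (hf : Monotone f)
    (h1 : ∀ i ∈ supp l' X' C, f i ∈ supp l X C)
    (h2 : ∀ t ∈ supp l X C, ∃ i ∈ supp l' X' C, f i = t) :
    f (firstIdx l' X' C) = firstIdx l X C ∧ f (lastIdx l' X' C) = lastIdx l X C := by
  constructor
  · obtain ⟨i, hi, he⟩ := h2 _ (firstIdx_mem hP hC)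
    exact le_antisymm (he ▸ hf (firstIdx_le hi)) (firstIdx_le (h1 _ (firstIdx_mem hP' hC)))
  · obtain ⟨i, hi, he⟩ := h2 _ (lastIdx_mem hP hC)
    exact le_antisymm (le_lastIdx (h1 _ (lastIdx_mem hP' hC))) (he ▸ hf (le_lastIdx hi))

/-- A modification of the decomposition from index `c` on, with `c` beyond the interval of `T`,
changes neither that interval nor `T`-structuredness, provided it creates no new in-branch. -/
lemma transfer {G : SimpleGraph V} {l l' : ℕ} {X X' : ℕ → Set V} (hP : IsPathDecomp G l X)
    {T : Set V} {c : ℕ} {f : ℕ → ℕ}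
    (hf1 : ∀ i < c, f i = i) (hf2 : ∀ i, c ≤ i → c ≤ f i) (hX : ∀ i < c, X' i = X i)
    (hidx : ∀ H, IsBranch G T H →
      f (firstIdx l' X' H) = firstIdx l X H ∧ f (lastIdx l' X' H) = lastIdx l X H)
    (hsub : ∀ H, IsInBranch G l' X' T H → IsInBranch G l X T H)
    (hne : ∃ H, IsInBranch G l X T H) (hc : botEnd G l X T < c)
    (hstr : IsStructured G l X T) :
    botStart G l' X' T = botStart G l X T ∧ botEnd G l' X' T = botEnd G l X T ∧
      IsStructured G l' X' T := by
  have hlow : ∀ i, f i < c → f i = i := fun i hi => by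
    rcases lt_or_ge i c with h | h
    · exact hf1 i h
    · exact absurd (hf2 i h) (by omega)
  have hin : ∀ H, IsInBranch G l X T H →
      firstIdx l' X' H = firstIdx l X H ∧ lastIdx l' X' H = lastIdx l X H ∧
      firstIdx l X H < c ∧ lastIdx l X H < c := by
    intro H hH
    obtain ⟨e1, e2⟩ := hidx H hH.1
    have h1 := le_botEnd hP hH
    have h2 := first_le_last hP hH.1.1.1
    have h3 := hlow (firstIdx l' X' H) (by omega)
    have h4 := hlow (lastIdx l' X' H) (by omega)
    omega
  have hiff : ∀ H, IsInBranch G l' X' T H ↔ IsInBranch G l X T H := by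
    refine fun H => ⟨hsub H, fun hH => ?_⟩
    obtain ⟨e1, e2, e3, e4⟩ := hin H hH
    refine ⟨hH.1, ?_, ?_⟩
    · rw [e1, hX _ e3]; exact hH.2.1
    · rw [e2, hX _ e4]; exact hH.2.2
  have hst : botStart G l' X' T = botStart G l X T := by
    unfold botStart
    congr 1
    ext i
    constructor
    · rintro ⟨H, hH, rfl⟩
      exact ⟨H, hsub H hH, (hin H (hsub H hH)).1⟩
    · rintro ⟨H, hH, rfl⟩
      exact ⟨H, (hiff H).2 hH, (hin H hH).1.symm⟩
  have hen : botEnd G l' X' T = botEnd G l X T := by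
    unfold botEnd
    congr 1
    ext i
    constructor
    · rintro ⟨H, hH, rfl⟩
      exact ⟨H, hsub H hH, (hin H (hsub H hH)).2.1⟩
    · rintro ⟨H, hH, rfl⟩
      exact ⟨H, (hiff H).2 hH, (hin H hH).2.1.symm⟩
  refine ⟨hst, hen, ?_⟩
  have hle := botStart_le_botEnd hP hne
  intro C hC
  have hC' : WaitsIn X C (botStart G l X T) (botEnd G l X T) := by
    apply hstr
    rcases hC with h | h | h
    · exact Or.inl h
    · refine Or.inr (Or.inl ⟨h.1, fun h' => h.2.1 ((hiff C).2 h'), ?_⟩)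
      have h3 := h.2.2
      rw [hst] at h3
      rw [← (hidx C h.1).1, hf1 _ (by omega)]
      exact h3
    · refine Or.inr (Or.inr ⟨h.1, fun h' => h.2.1 ((hiff C).2 h'), ?_, ?_⟩)
      · have h3 := h.2.2.1
        rw [hst] at h3
        rw [← (hidx C h.1).1]
        rcases lt_or_ge (firstIdx l' X' C) c with h4 | h4
        · rw [hf1 _ h4]; exact h3
        · have := hf2 _ h4
          omega
      · have h3 := h.2.2.2
        rw [hen] at h3
        rw [← (hidx C h.1).2]
        rcases lt_or_ge (lastIdx l' X' C) c with h4 | h4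
        · rw [hf1 _ h4]; exact h3
        · have := hf2 _ h4
          omega
  intro t h1 h2
  rw [hst] at h1 ⊢
  rw [hen] at h2
  rw [hX t (by omega), hX _ (by omega)]
  exact hC' t h1 h2

/-- The hypotheses maintained along the construction: an `I`-connected path decomposition with bags
of size at most `w` that is `T`-structured and has the interval of `T` before that of `S`. -/
structure Admissible (G : SimpleGraph V) (I : Set V) (w : ℕ) (T S : Set V) (l : ℕ)
    (X : ℕ → Set V) : Prop where
  pd : IsPathDecomp G l X
  good : ∀ i < l, IGood G I {v | ∃ j ≤ i, v ∈ X j}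
  card : ∀ i < l, (X i).ncard ≤ w
  str : IsStructured G l X T
  lt : botEnd G l X T < botStart G l X S

/-! ### Inserting a bag -/

/-- The sequence `X` with the extra bag `Y` inserted at position `a`. -/
def insBag (X : ℕ → Set V) (a : ℕ) (Y : Set V) : ℕ → Set V :=
  fun i => if i < a then X i else if i = a then Y else X (i - 1)

/-- Position in the old sequence of position `i` of `insBag X a Y`; the new bag is sent to the old
position `a`. -/
def insIdx (a i : ℕ) : ℕ := if i ≤ a then i else i - 1

section Insert

variable {G : SimpleGraph V} {l a : ℕ} {X : ℕ → Set V} {Y : Set V}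

lemma insBag_sub (hY : Y ⊆ X a) (i : ℕ) : insBag X a Y i ⊆ X (insIdx a i) := by
  unfold insBag insIdx
  rcases lt_trichotomy i a with h | h | h
  · simp [h, h.le]
  · subst h; simpa using hY
  · simp [h.not_gt, h.ne', h.not_ge]

/-- Position in `insBag X a Y` of the old bag `t`. -/
def insPos (a t : ℕ) : ℕ := if t < a then t else t + 1

lemma insBag_pos (t : ℕ) : insBag X a Y (insPos a t) = X t ∧ insIdx a (insPos a t) = t := by
  unfold insBag insIdx insPos
  split_ifs <;> first | omega | simp_all

lemma insIdx_mono : Monotone (insIdx a) := by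
  intro i j h
  unfold insIdx
  split_ifs <;> omega

lemma insIdx_lt (ha : a < l) {i : ℕ} (hi : i < l + 1) : insIdx a i < l := by
  unfold insIdx
  split_ifs <;> omega

lemma insPos_lt {t : ℕ} (ht : t < l) : insPos a t < l + 1 := by
  unfold insPos
  split_ifs <;> omega

lemma insBag_pd (hP : IsPathDecomp G l X) (ha1 : 1 ≤ a) (hal : a < l) (hY : Y ⊆ X a)
    (hY' : X (a - 1) ∩ X a ⊆ Y) : IsPathDecomp G (l + 1) (insBag X a Y) := by
  refine ⟨fun v => ?_, fun u v huv => ?_, fun i j m hij hjm hm v hv => ?_⟩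
  · obtain ⟨i, hi, h⟩ := hP.1 v
    exact ⟨insPos a i, insPos_lt hi, by rwa [(insBag_pos _).1]⟩
  · obtain ⟨i, hi, h⟩ := hP.2.1 u v huv
    exact ⟨insPos a i, insPos_lt hi, by rwa [(insBag_pos _).1]⟩
  · have h1 := insBag_sub hY i hv.1
    have h2 := insBag_sub hY m hv.2
    have hml := insIdx_lt hal hm
    by_cases hja : j = a
    · subst hja
      rcases eq_or_lt_of_le hij with rfl | hij'
      · exact hv.1
      rcases eq_or_lt_of_le hjm with rfl | hjm'
      · exact hv.2
      have e1 : insIdx j i ≤ j - 1 := by unfold insIdx; split_ifs <;> omega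
      have e2 : j ≤ insIdx j m := by unfold insIdx; split_ifs <;> omega
      have : v ∈ Y := hY' ⟨hP.2.2 _ _ _ e1 (by omega) hml ⟨h1, h2⟩,
        hP.2.2 _ _ _ (by omega) e2 hml ⟨h1, h2⟩⟩
      simpa [insBag] using this
    · have hj := hP.2.2 _ _ _ (insIdx_mono hij) (insIdx_mono hjm) hml ⟨h1, h2⟩
      have : insBag X a Y j = X (insIdx a j) := by
        unfold insBag insIdx
        split_ifs <;> first | omega | rfl
      rwa [this]

lemma insBag_clock (hP : IsPathDecomp G l X) (ha1 : 1 ≤ a) (hal : a < l) (hY : Y ⊆ X a)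
    (hY' : X (a - 1) ∩ X a ⊆ Y) {C : Set V} (hC : C.Nonempty) :
    insIdx a (firstIdx (l + 1) (insBag X a Y) C) = firstIdx l X C ∧
      insIdx a (lastIdx (l + 1) (insBag X a Y) C) = lastIdx l X C := by
  refine clock hP (insBag_pd hP ha1 hal hY hY') hC insIdx_mono ?_ ?_
  · rintro i ⟨hi, h⟩
    exact ⟨insIdx_lt hal hi, h.mono (Set.inter_subset_inter_right _ (insBag_sub hY i))⟩
  · rintro t ⟨ht, h⟩
    exact ⟨insPos a t, ⟨insPos_lt ht, by rwa [(insBag_pos _).1]⟩, (insBag_pos (X := X) (Y := Y) t).2⟩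

lemma insBag_inBranch (hP : IsPathDecomp G l X) (ha1 : 1 ≤ a) (hal : a < l) (hY : Y ⊆ X a)
    (hY' : X (a - 1) ∩ X a ⊆ Y) {S C : Set V}
    (hC : IsInBranch G (l + 1) (insBag X a Y) S C) : IsInBranch G l X S C := by
  obtain ⟨e1, e2⟩ := insBag_clock hP ha1 hal hY hY' hC.1.1.1
  refine ⟨hC.1, ?_, ?_⟩
  · rw [← e1]; exact hC.2.1.trans (insBag_sub hY _)
  · rw [← e2]; exact hC.2.2.trans (insBag_sub hY _)

/-- Inserting a bag right before the interval of `S` keeps the decomposition admissible. -/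
lemma insBag_admissible [Finite V] {I T S : Set V} {w k : ℕ} (hwk : w ≤ k)
    (h : Admissible G I w T S l X) (hT : IsBottleneck G k T) (hS : IsBottleneck G k S)
    (ha : a = botStart G l X S) (hY : Y ⊆ X a) (hY' : X (a - 1) ∩ X a ⊆ Y)
    (hgood : IGood G I ({v | ∃ j ≤ a - 1, v ∈ X j} ∪ Y)) :
    Admissible G I w T S (l + 1) (insBag X a Y) := by
  have hinS := exists_inBranch h.pd (fun i hi => (h.card i hi).trans hwk) hS
  have hinT := exists_inBranch h.pd (fun i hi => (h.card i hi).trans hwk) hT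
  have hal : a < l := ha ▸ (botStart_le_botEnd h.pd hinS).trans_lt (botEnd_lt h.pd hinS)
  have hc : botEnd G l X T < a := ha ▸ h.lt
  have ha1 : 1 ≤ a := by omega
  have hP' := insBag_pd h.pd ha1 hal hY hY'
  have hcard : ∀ i < l + 1, (insBag X a Y i).ncard ≤ w := fun i hi =>
    (Set.ncard_le_ncard (insBag_sub hY i) (Set.toFinite _)).trans (h.card _ (insIdx_lt hal hi))
  have hlow : ∀ i < a, insIdx a i = i := fun i hi => by simp [insIdx, hi.le]
  obtain ⟨-, e2, e3⟩ := transfer (f := insIdx a) (c := a) h.pd hlow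
    (fun i hi => by unfold insIdx; split_ifs <;> omega)
    (fun i hi => by simp [insBag, hi])
    (fun H hH => insBag_clock h.pd ha1 hal hY hY' hH.1.1)
    (fun H hH => insBag_inBranch h.pd ha1 hal hY hY' hH) hinT hc h.str
  refine ⟨hP', fun i hi => ?_, hcard, e3, ?_⟩
  · rcases lt_trichotomy i a with hia | rfl | hia
    · convert h.good i (by omega) using 1
      ext v
      refine exists_congr fun j => and_congr_right fun hj => ?_
      simp [insBag, show j < a by omega]
    · convert hgood using 1
      ext v
      constructor
      · rintro ⟨j, hj, hv⟩
        rcases eq_or_lt_of_le hj with rfl | hj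
        · exact Or.inr (by simpa [insBag] using hv)
        · exact Or.inl ⟨j, by omega, by simpa [insBag, hj] using hv⟩
      · rintro (⟨j, hj, hv⟩ | hv)
        · exact ⟨j, by omega, by simpa [insBag, show j < i by omega] using hv⟩
        · exact ⟨i, le_rfl, by simpa [insBag] using hv⟩
    · convert h.good (i - 1) (by omega) using 1
      ext v
      constructor
      · rintro ⟨j, hj, hv⟩
        refine ⟨insIdx a j, ?_, insBag_sub hY j hv⟩
        unfold insIdx
        split_ifs <;> omega
      · rintro ⟨j, hj, hv⟩
        refine ⟨insPos a j, ?_, by rwa [(insBag_pos _).1]⟩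
        unfold insPos
        split_ifs <;> omega
  · obtain ⟨H, hH, he⟩ := exists_botStart
      (exists_inBranch hP' (fun i hi => (hcard i hi).trans hwk) hS)
    have h1 := botStart_le (insBag_inBranch h.pd ha1 hal hY hY' hH)
    rw [← (insBag_clock h.pd ha1 hal hY hY' hH.1.1.1).1, ← ha] at h1
    have h2 : insIdx a (firstIdx (l + 1) (insBag X a Y) H) ≤ firstIdx (l + 1) (insBag X a Y) H := by
      unfold insIdx; split_ifs <;> omega
    omega

end Insert

/-- An admissible decomposition can be refined so that `S` is already contained in the bag
preceding its interval. -/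
lemma exists_refinement [Finite V] {G : SimpleGraph V} {I T S : Set V} {w k : ℕ} (hwk : w ≤ k)
    (hT : IsBottleneck G k T) (hS : IsBottleneck G k S) (N : ℕ) :
    ∀ (l : ℕ) (X : ℕ → Set V), Admissible G I w T S l X →
      {C | IsInBranch G l X S C}.ncard ≤ N →
      ∃ l' X', Admissible G I w T S l' X' ∧ S ⊆ X' (botStart G l' X' S - 1) := by
  induction N with
  | zero =>
    intro l X h hN
    obtain ⟨C, hC⟩ := exists_inBranch h.pd (fun i hi => (h.card i hi).trans hwk) hS
    have := (Set.ncard_pos (Set.toFinite {C | IsInBranch G l X S C})).2 ⟨C, hC⟩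
    omega
  | succ N ih =>
    intro l X h hN
    by_cases hdone : S ⊆ X (botStart G l X S - 1)
    · exact ⟨l, X, h, hdone⟩
    have hinS := exists_inBranch h.pd (fun i hi => (h.card i hi).trans hwk) hS
    obtain ⟨a, ha⟩ : ∃ a, a = botStart G l X S := ⟨_, rfl⟩
    have hal : a < l := ha ▸ (botStart_le_botEnd h.pd hinS).trans_lt (botEnd_lt h.pd hinS)
    have ha1 : 1 ≤ a := by have := h.lt; omega
    have hSa : S ⊆ X a := subset_bag h.pd hinS ha.ge (ha ▸ botStart_le_botEnd h.pd hinS)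
    set U : Set V := {v | ∃ j ≤ a - 1, v ∈ X j} with hU
    set B : Set V := {v | ∃ C, IsInBranch G l X S C ∧ v ∈ C} with hB
    have hUgood : IGood G I U := h.good (a - 1) (by omega)
    have hUB : ∀ v ∈ U, v ∉ B := by
      rintro v ⟨j, hj, hvj⟩ ⟨C, hC, hvC⟩
      have h1 := botStart_le hC
      have h2 := firstIdx_le (l := l) (X := X) (C := C) ⟨by omega, v, hvC, hvj⟩
      omega
    -- a largest `B`-free bag between `X (a - 1) ∩ X a` and `X a` keeping the prefix `I`-good
    obtain ⟨Y, hYmax⟩ := (Set.toFinite {Y : Set V | X (a - 1) ∩ X a ⊆ Y ∧ Y ⊆ X a ∧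
        (∀ v ∈ Y, v ∉ B) ∧ IGood G I (U ∪ Y)}).exists_maximal
      ⟨X (a - 1) ∩ X a, le_rfl, Set.inter_subset_right, fun v hv => hUB v ⟨a - 1, le_rfl, hv.1⟩, by
        have : X (a - 1) ∩ X a ⊆ U := fun v hv => ⟨a - 1, le_rfl, hv.1⟩
        rwa [Set.union_eq_self_of_subset_right this]⟩
    obtain ⟨⟨hY', hY, hYB, hYgood⟩, hmax⟩ := hYmax
    by_cases hSY : S ⊆ Y
    · have hadm := insBag_admissible hwk h hT hS ha hY hY' hYgood
      refine ⟨_, _, hadm, ?_⟩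
      have hin' := exists_inBranch hadm.pd (fun i hi => (hadm.card i hi).trans hwk) hS
      have hend := (botStart_le_botEnd hadm.pd hin').trans_lt (botEnd_lt hadm.pd hin')
      have hsub := subset_bag hadm.pd hin' le_rfl (botStart_le_botEnd hadm.pd hin')
      obtain ⟨H, hH, he⟩ := exists_botStart hin'
      have hH0 := insBag_inBranch h.pd ha1 hal hY hY' hH
      have h1 := botStart_le hH0
      have h2 := (insBag_clock h.pd ha1 hal hY hY' hH.1.1.1).1
      have h3 := firstIdx_mem hadm.pd hH.1.1.1
      rw [← he] at h2 h3
      have hgt : a < botStart G (l + 1) (insBag X a Y) S := by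
        by_contra hcon
        have h4 : botStart G (l + 1) (insBag X a Y) S = a := by
          unfold insIdx at h2
          split_ifs at h2 <;> omega
        rw [h4] at h3
        obtain ⟨v, hvH, hv⟩ := h3.2
        exact hYB v (by simpa [insBag] using hv) ⟨H, hH0, hvH⟩
      intro s hs
      refine hadm.pd.2.2 a _ _ (by omega) (Nat.sub_le _ _) hend ⟨?_, hsub hs⟩
      simpa [insBag] using hSY hs
    · obtain ⟨s, hs, hsY⟩ := Set.not_subset.1 hSY
      have hsU : s ∉ U := by
        rintro ⟨j, hj, hsj⟩
        exact hsY (hY' ⟨h.pd.2.2 j _ a hj (by omega) hal ⟨hsj, hSa hs⟩, hSa hs⟩)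
      have hN' : IGood G I (U ∪ X a) := by
        convert h.good a hal using 1
        ext v
        constructor
        · rintro (⟨j, hj, hv⟩ | hv)
          exacts [⟨j, by omega, hv⟩, ⟨a, le_rfl, hv⟩]
        · rintro ⟨j, hj, hv⟩
          rcases eq_or_lt_of_le hj with rfl | hj
          exacts [Or.inr hv, Or.inl ⟨j, by omega, hv⟩]
      obtain ⟨v, ⟨hv1, hv2⟩, hvgood⟩ := igood_extend hYgood hN'
        ⟨s, Or.inr (hSa hs), fun h => h.elim hsU hsY⟩
      have hvX : v ∈ X a := hv1.resolve_left fun h => hv2 (Or.inl h)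
      have hvgood' : IGood G I (U ∪ insert v Y) := by rwa [Set.union_insert]
      have hYv : insert v Y ⊆ X a := Set.insert_subset hvX hY
      have hYv' : X (a - 1) ∩ X a ⊆ insert v Y := hY'.trans (Set.subset_insert _ _)
      have hvB : v ∈ B := by
        by_contra hvB
        have := hmax (y := insert v Y) ⟨hYv', hYv, ?_, hvgood'⟩ (Set.subset_insert _ _)
        · exact hv2 (Or.inr (this (Set.mem_insert _ _)))
        · rintro x (rfl | hx)
          exacts [hvB, hYB x hx]
      obtain ⟨H, hH, hvH⟩ := hvB
      have hadm := insBag_admissible hwk h hT hS ha hYv hYv' hvgood'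
      refine ih _ _ hadm (Nat.le_of_lt_succ (lt_of_lt_of_le (Set.ncard_lt_ncard ?_) hN))
      refine ⟨fun C hC => insBag_inBranch h.pd ha1 hal hYv hYv' hC, fun hcon => ?_⟩
      -- `H` enters in the new bag, which misses `s`, so it is no longer an in-branch
      have hH' : IsInBranch G (l + 1) (insBag X a (insert v Y)) S H := hcon hH
      have h1 := botStart_le hH
      have h2 := (insBag_clock h.pd ha1 hal hYv hYv' hH.1.1.1).1
      have h3 : firstIdx (l + 1) (insBag X a (insert v Y)) H ≤ a :=
        firstIdx_le ⟨by omega, v, hvH, by simp [insBag]⟩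
      have h4 : firstIdx (l + 1) (insBag X a (insert v Y)) H = a := by
        unfold insIdx at h2
        split_ifs at h2
        omega
      have h5 := hH'.2.1 hs
      rw [h4] at h5
      have h6 : s ∈ insert v Y := by simpa [insBag] using h5
      rcases h6 with rfl | h6
      · exact hH.1.1.2.1 hvH hs
      · exact hsY h6

/-! ### Stalling the outside of the in-branches -/

/-- The index map that is the identity up to `t`, then stays at `t` for `n` additional steps, and
then proceeds. -/
def stallIdx (t n i : ℕ) : ℕ := if i ≤ t then i else if i ≤ t + n then t else i - n

/-- The decomposition in which the vertices outside `B` stall at bag `t` for `n` additional steps,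
during which the vertices of `B` run through the bags `a, …, a + n - 1`. -/
def stall (X : ℕ → Set V) (B : Set V) (a t n i : ℕ) : Set V :=
  (X (stallIdx t n i) \ B) ∪ {v | v ∈ B ∧ t < i ∧ i ≤ t + n ∧ v ∈ X (i - t - 1 + a)}

lemma mem_stall_out {X : ℕ → Set V} {B : Set V} {a t n i : ℕ} {v : V} (hv : v ∉ B) :
    v ∈ stall X B a t n i ↔ v ∈ X (stallIdx t n i) := by
  simp [stall, hv]

lemma mem_stall_in {X : ℕ → Set V} {B : Set V} {a t n i : ℕ} {v : V} (hv : v ∈ B) :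
    v ∈ stall X B a t n i ↔ t < i ∧ i ≤ t + n ∧ v ∈ X (i - t - 1 + a) := by
  simp [stall, hv]

/-- If `S` is contained in the bag preceding its interval, then stalling everything outside the
in-branches of `S` at a bag `t` of the interval with the fewest such vertices makes the
decomposition `S`-structured. -/
lemma exists_structured [Finite V] {G : SimpleGraph V} {I T S : Set V} {w k l : ℕ}
    {X : ℕ → Set V} (hwk : w ≤ k) (h : Admissible G I w T S l X) (hT : IsBottleneck G k T)
    (hS : IsBottleneck G k S) (hpre : S ⊆ X (botStart G l X S - 1)) :
    ∃ l' X', Admissible G I w T S l' X' ∧ IsStructured G l' X' S := by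
  have hP := h.pd
  have hinS := exists_inBranch hP (fun i hi => (h.card i hi).trans hwk) hS
  have hinT := exists_inBranch hP (fun i hi => (h.card i hi).trans hwk) hT
  obtain ⟨a, ha⟩ : ∃ a, a = botStart G l X S := ⟨_, rfl⟩
  obtain ⟨b, hb⟩ : ∃ b, b = botEnd G l X S := ⟨_, rfl⟩
  have hab : a ≤ b := ha ▸ hb ▸ botStart_le_botEnd hP hinS
  have hbl : b < l := hb ▸ botEnd_lt hP hinS
  have hTa : botEnd G l X T < a := ha ▸ h.lt
  have ha1 : 1 ≤ a := by omega
  have hSX : ∀ i, a ≤ i → i ≤ b → S ⊆ X i := fun i h1 h2 =>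
    subset_bag hP hinS (ha ▸ h1) (hb ▸ h2)
  rw [← ha] at hpre
  obtain ⟨B, hB⟩ : ∃ B : Set V, B = {v | ∃ C, IsInBranch G l X S C ∧ v ∈ C} := ⟨_, rfl⟩
  have hBmem : ∀ v, v ∈ B ↔ ∃ C, IsInBranch G l X S C ∧ v ∈ C := fun v => by rw [hB]; rfl
  have hBI : ∀ v ∈ B, ∀ i < l, v ∈ X i → a ≤ i ∧ i ≤ b := by
    intro v hv i hi hvi
    obtain ⟨C, hC, hvC⟩ := (hBmem v).1 hv
    have hs : i ∈ supp l X C := ⟨hi, v, hvC, hvi⟩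
    exact ⟨ha ▸ (botStart_le hC).trans (firstIdx_le hs), hb ▸ (le_lastIdx hs).trans (le_botEnd hP hC)⟩
  have hSB : ∀ v ∈ S, v ∉ B := by
    intro v hv hvB
    obtain ⟨C, hC, hvC⟩ := (hBmem v).1 hvB
    exact hC.1.1.2.1 hvC hv
  have hBS : ∀ u ∈ B, ∀ v ∉ B, G.Adj u v → v ∈ S := by
    intro u hu v hv huv
    obtain ⟨C, hC, huC⟩ := (hBmem u).1 hu
    rw [← hC.1.2]
    exact ⟨fun hvC => hv ((hBmem v).2 ⟨C, hC, hvC⟩), u, huC, huv⟩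
  have hTB : ∀ v ∈ T, v ∉ B := by
    intro v hv hvB
    have h1 := botStart_le_botEnd hP hinT
    have h2 := hBI v hvB _ (by omega) (subset_bag hP hinT le_rfl h1 hv)
    omega
  -- a component of `G - S` that is not an in-branch avoids `B`
  have hCB : ∀ C, IsCompOf G S C → ¬ IsInBranch G l X S C → ∀ v ∈ C, v ∉ B := by
    intro C hC hnot v hvC hvB
    obtain ⟨Q, hQ, hvQ⟩ := (hBmem v).1 hvB
    exact hnot (comp_eq hC hQ.1.1 hvC hvQ ▸ hQ)
  obtain ⟨t, ⟨hat, htb⟩, hmin⟩ := Set.exists_min_image (Set.Icc a b) (fun i => (X i \ B).ncard)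
    (Set.finite_Icc a b) ⟨a, le_rfl, hab⟩
  obtain ⟨n, hn⟩ : ∃ n, n = b - a + 1 := ⟨_, rfl⟩
  have fmono : Monotone (stallIdx t n) := by
    intro i j hij
    unfold stallIdx
    split_ifs <;> omega
  have flt : ∀ i < l + n, stallIdx t n i < l := by
    intro i hi
    unfold stallIdx
    split_ifs <;> omega
  have fwin : ∀ i, t ≤ i → i ≤ t + n → stallIdx t n i = t := by
    intro i h1 h2
    unfold stallIdx
    split_ifs <;> omega
  have fpos : ∀ j < l, ∃ i < l + n, stallIdx t n i = j := by
    intro j hj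
    refine ⟨if j ≤ t then j else j + n, ?_, ?_⟩
    · split_ifs <;> omega
    · unfold stallIdx
      split_ifs <;> omega
  have hP' : IsPathDecomp G (l + n) (stall X B a t n) := by
    have hvert : ∀ v ∈ B, ∀ j < l, v ∈ X j → (j - a + t + 1 < l + n ∧ t < j - a + t + 1 ∧
        j - a + t + 1 ≤ t + n ∧ j - a + t + 1 - t - 1 + a = j) := by
      intro v hv j hj hvj
      have := hBI v hv j hj hvj
      omega
    refine ⟨fun v => ?_, fun u v huv => ?_, fun i j m hij hjm hm v hv => ?_⟩
    · obtain ⟨j, hj, hvj⟩ := hP.1 v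
      by_cases hvB : v ∈ B
      · obtain ⟨h1, h2, h3, h4⟩ := hvert v hvB j hj hvj
        exact ⟨_, h1, (mem_stall_in hvB).2 ⟨h2, h3, by rwa [h4]⟩⟩
      · obtain ⟨i, hi, rfl⟩ := fpos j hj
        exact ⟨i, hi, (mem_stall_out hvB).2 hvj⟩
    · have hmix : ∀ u v, u ∈ B → G.Adj u v →
          ∃ i < l + n, u ∈ stall X B a t n i ∧ v ∈ stall X B a t n i := by
        intro u v huB huv
        obtain ⟨j, hj, huj, hvj⟩ := hP.2.1 u v huv
        obtain ⟨h1, h2, h3, h4⟩ := hvert u huB j hj huj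
        refine ⟨_, h1, (mem_stall_in huB).2 ⟨h2, h3, by rwa [h4]⟩, ?_⟩
        by_cases hvB : v ∈ B
        · exact (mem_stall_in hvB).2 ⟨h2, h3, by rwa [h4]⟩
        · rw [mem_stall_out hvB, fwin _ (by omega) h3]
          exact hSX t hat htb (hBS u huB v hvB huv)
      by_cases huB : u ∈ B
      · exact hmix u v huB huv
      by_cases hvB : v ∈ B
      · obtain ⟨i, hi, h1, h2⟩ := hmix v u hvB huv.symm
        exact ⟨i, hi, h2, h1⟩
      obtain ⟨j, hj, huj, hvj⟩ := hP.2.1 u v huv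
      obtain ⟨i, hi, rfl⟩ := fpos j hj
      exact ⟨i, hi, (mem_stall_out huB).2 huj, (mem_stall_out hvB).2 hvj⟩
    · by_cases hvB : v ∈ B
      · obtain ⟨h1, h2, h3⟩ := (mem_stall_in hvB).1 hv.1
        obtain ⟨h4, h5, h6⟩ := (mem_stall_in hvB).1 hv.2
        exact (mem_stall_in hvB).2 ⟨by omega, by omega,
          hP.2.2 _ _ _ (by omega) (by omega) (by omega) ⟨h3, h6⟩⟩
      · exact (mem_stall_out hvB).2 (hP.2.2 _ _ _ (fmono hij) (fmono hjm) (flt m hm)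
          ⟨(mem_stall_out hvB).1 hv.1, (mem_stall_out hvB).1 hv.2⟩)
  have hcard : ∀ i < l + n, (stall X B a t n i).ncard ≤ w := by
    intro i hi
    by_cases hwin : t < i ∧ i ≤ t + n
    · have hj1 : a ≤ i - t - 1 + a := by omega
      have hj2 : i - t - 1 + a ≤ b := by omega
      have hsub : stall X B a t n i ⊆ (X t \ B) ∪ (X (i - t - 1 + a) ∩ B) := by
        intro v hv
        by_cases hvB : v ∈ B
        · exact Or.inr ⟨((mem_stall_in hvB).1 hv).2.2, hvB⟩
        · rw [mem_stall_out hvB, fwin i hwin.1.le hwin.2] at hv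
          exact Or.inl ⟨hv, hvB⟩
      have h1 := Set.ncard_le_ncard hsub (Set.toFinite _)
      have h2 := Set.ncard_union_le (X t \ B) (X (i - t - 1 + a) ∩ B)
      have h3 := hmin _ ⟨hj1, hj2⟩
      have h4 := Set.ncard_inter_add_ncard_sdiff_eq_ncard (X (i - t - 1 + a)) B (Set.toFinite _)
      have h5 := h.card (i - t - 1 + a) (by omega)
      omega
    · refine (Set.ncard_le_ncard (fun v hv => ?_) (Set.toFinite _)).trans (h.card _ (flt i hi))
      by_cases hvB : v ∈ B
      · obtain ⟨h1, h2, -⟩ := (mem_stall_in hvB).1 hv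
        exact absurd ⟨h1, h2⟩ hwin
      · exact (mem_stall_out hvB).1 hv
  have hgood : ∀ i < l + n, IGood G I {v | ∃ j ≤ i, v ∈ stall X B a t n j} := by
    intro i hi
    -- `q` is the clock of `B`; before the stalling period no vertex of `B` has appeared
    obtain ⟨q, hq⟩ : ∃ q, q = if i ≤ t then 0 else min (i - t - 1 + a) b := ⟨_, rfl⟩
    have hql : q < l := by
      rw [hq]
      split_ifs
      · omega
      · exact (min_le_right _ _).trans_lt hbl
    have hfl := flt i hi
    have hearly : ∀ m < a, ∀ v ∈ {v | ∃ j ≤ m, v ∈ X j}, v ∉ B := by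
      rintro m hm v ⟨j, hj, hvj⟩ hvB
      have := hBI v hvB j (by omega) hvj
      omega
    have hset : {v | ∃ j ≤ i, v ∈ stall X B a t n j} =
        ({v | ∃ j ≤ stallIdx t n i, v ∈ X j} \ B) ∪ ({v | ∃ j ≤ q, v ∈ X j} ∩ B) := by
      ext v
      by_cases hvB : v ∈ B
      · constructor
        · rintro ⟨j, hj, hv⟩
          obtain ⟨h1, h2, h3⟩ := (mem_stall_in hvB).1 hv
          refine Or.inr ⟨⟨_, ?_, h3⟩, hvB⟩
          rw [hq, if_neg (by omega)]
          exact le_min (by omega) (by omega)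
        · rintro (h' | ⟨⟨j, hj, hvj⟩, -⟩)
          · exact absurd hvB h'.2
          · have h1 := hBI v hvB j (by omega) hvj
            by_cases hit : i ≤ t
            · rw [hq, if_pos hit] at hj
              omega
            · rw [hq, if_neg hit] at hj
              have h2 := hj.trans (min_le_left _ _)
              refine ⟨j - a + t + 1, by omega, (mem_stall_in hvB).2 ⟨by omega, by omega, ?_⟩⟩
              rwa [show j - a + t + 1 - t - 1 + a = j by omega]
      · constructor
        · rintro ⟨j, hj, hv⟩
          exact Or.inl ⟨⟨_, fmono hj, (mem_stall_out hvB).1 hv⟩, hvB⟩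
        · rintro (⟨⟨j, hj, hvj⟩, -⟩ | h')
          · obtain ⟨m, hm, rfl⟩ := fpos j (by omega)
            rcases le_total m i with hmi | hmi
            · exact ⟨m, hmi, (mem_stall_out hvB).2 hvj⟩
            · have := le_antisymm hj (fmono hmi)
              exact ⟨i, le_rfl, (mem_stall_out hvB).2 (this ▸ hvj)⟩
          · exact absurd h'.2 hvB
    rw [hset]
    refine igood_mix (A := {v | ∃ j ≤ a - 1, v ∈ X j}) (S := S) (h.good _ hfl) (h.good _ hql)
      (h.good _ (by omega)) (fun s hs => ⟨a - 1, le_rfl, hpre hs⟩) (hearly _ (by omega)) hBS ?_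
    by_cases hai : a - 1 ≤ stallIdx t n i
    · exact Or.inl fun v ⟨j, hj, hv⟩ => ⟨j, hj.trans hai, hv⟩
    · have hit : i ≤ t := by
        by_contra hit
        have := fmono (show t ≤ i by omega)
        rw [fwin t le_rfl (by omega)] at this
        omega
      refine Or.inr ⟨hearly q ?_, hearly _ (by omega)⟩
      rw [hq, if_pos hit]
      omega
  have hclock : ∀ H : Set V, H.Nonempty → ((∀ v ∈ H, v ∉ B) ∨ (H ∩ S).Nonempty) →
      stallIdx t n (firstIdx (l + n) (stall X B a t n) H) = firstIdx l X H ∧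
      stallIdx t n (lastIdx (l + n) (stall X B a t n) H) = lastIdx l X H := by
    intro H hH hHS
    refine clock hP hP' hH fmono ?_ ?_
    · rintro i ⟨hi, v, hvH, hv⟩
      refine ⟨flt i hi, ?_⟩
      by_cases hvB : v ∈ B
      · rcases hHS with h' | ⟨s, hsH, hsS⟩
        · exact absurd hvB (h' v hvH)
        · obtain ⟨h1, h2, -⟩ := (mem_stall_in hvB).1 hv
          refine ⟨s, hsH, ?_⟩
          rw [fwin i h1.le h2]
          exact hSX t hat htb hsS
      · exact ⟨v, hvH, (mem_stall_out hvB).1 hv⟩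
    · rintro j ⟨hj, v, hvH, hv⟩
      obtain ⟨i, hi, rfl⟩ := fpos j hj
      refine ⟨i, ⟨hi, ?_⟩, rfl⟩
      by_cases hvB : v ∈ B
      · rcases hHS with h' | ⟨s, hsH, hsS⟩
        · exact absurd hvB (h' v hvH)
        · obtain ⟨h1, h2⟩ := hBI v hvB _ hj hv
          exact ⟨s, hsH, (mem_stall_out (hSB s hsS)).2 (hSX _ h1 h2 hsS)⟩
      · exact ⟨v, hvH, (mem_stall_out hvB).2 hv⟩
  have hTbr : ∀ H, IsBranch G T H → (∀ v ∈ H, v ∉ B) ∨ (H ∩ S).Nonempty := by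
    intro H hH
    by_contra hcon
    push Not at hcon
    obtain ⟨⟨v, hvH, hvB⟩, hHS⟩ := hcon
    obtain ⟨Q, hQ, hvQ⟩ := (hBmem v).1 hvB
    -- a `T`-branch avoiding `S` but meeting the `S`-branch `Q` would be equal to `Q`
    have hQH : Q ⊆ H := subset_of_closed hQ.1.1.2.2.1 hvQ hvH fun u _ huH x hx hux =>
      hH.1.2.2.2 u huH x (fun hxT => hTB x hxT ((hBmem x).2 ⟨Q, hQ, hx⟩)) hux
    have hHQ : H ⊆ Q := subset_of_closed hH.1.2.2.1 hvH hvQ fun u _ huQ x hx hux =>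
      hQ.1.1.2.2.2 u huQ x (fun hxS => (hHS ▸ (⟨hx, hxS⟩ : x ∈ H ∩ S) : x ∈ (∅ : Set V))) hux
    have hTS : T = S := by rw [← hH.2, ← hQ.1.2, Set.Subset.antisymm hHQ hQH]
    rw [hTS] at hTa
    omega
  have hsubT : ∀ i, T ⊆ stall X B a t n i → T ⊆ X (stallIdx t n i) := fun i hi v hv =>
    (mem_stall_out (hTB v hv)).1 (hi hv)
  have hsubS : ∀ i, S ⊆ stall X B a t n i → S ⊆ X (stallIdx t n i) := fun i hi v hv =>
    (mem_stall_out (hSB v hv)).1 (hi hv)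
  obtain ⟨-, e2, e3⟩ := transfer (X' := stall X B a t n) (l' := l + n) (T := T)
    (f := stallIdx t n) (c := a) hP
    (fun i hi => by unfold stallIdx; split_ifs <;> omega)
    (fun i hi => by unfold stallIdx; split_ifs <;> omega)
    (fun i hi => by
      have hfi : stallIdx t n i = i := by unfold stallIdx; split_ifs <;> omega
      ext v
      by_cases hvB : v ∈ B
      · rw [mem_stall_in hvB]
        constructor
        · intro h'; omega
        · intro h'
          have := hBI v hvB i (by omega) h'
          omega
      · rw [mem_stall_out hvB, hfi])
    (fun H hH => hclock H hH.1.1 (hTbr H hH))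
    (fun H hH => by
      obtain ⟨h1, h2⟩ := hclock H hH.1.1.1 (hTbr H hH.1)
      exact ⟨hH.1, h1 ▸ hsubT _ hH.2.1, h2 ▸ hsubT _ hH.2.2⟩)
    hinT hTa h.str
  have hin_iff : ∀ H, IsInBranch G (l + n) (stall X B a t n) S H ↔ IsInBranch G l X S H := by
    intro H
    constructor
    · intro hH
      by_contra hnot
      obtain ⟨h1, h2⟩ := hclock H hH.1.1.1 (Or.inl (hCB H hH.1.1 hnot))
      exact hnot ⟨hH.1, h1 ▸ hsubS _ hH.2.1, h2 ▸ hsubS _ hH.2.2⟩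
    · intro hH
      have hwin : ∀ i ∈ supp (l + n) (stall X B a t n) H, S ⊆ stall X B a t n i := by
        rintro i ⟨-, v, hvH, hv⟩ s hs
        obtain ⟨h1, h2, -⟩ := (mem_stall_in ((hBmem v).2 ⟨H, hH, hvH⟩)).1 hv
        rw [mem_stall_out (hSB s hs), fwin i h1.le h2]
        exact hSX t hat htb hs
      exact ⟨hH.1, hwin _ (firstIdx_mem hP' hH.1.1.1), hwin _ (lastIdx_mem hP' hH.1.1.1)⟩
  have hin' := exists_inBranch hP' (fun i hi => (hcard i hi).trans hwk) hS
  have hstart : t < botStart G (l + n) (stall X B a t n) S := by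
    obtain ⟨H, hH, he⟩ := exists_botStart hin'
    obtain ⟨-, v, hvH, hv⟩ := firstIdx_mem hP' hH.1.1.1
    rw [he]
    exact ((mem_stall_in ((hBmem v).2 ⟨H, (hin_iff H).1 hH, hvH⟩)).1 hv).1
  have hend : botEnd G (l + n) (stall X B a t n) S ≤ t + n := by
    obtain ⟨H, hH, he⟩ := exists_botEnd hP' hin'
    obtain ⟨-, v, hvH, hv⟩ := lastIdx_mem hP' hH.1.1.1
    rw [he]
    exact ((mem_stall_in ((hBmem v).2 ⟨H, (hin_iff H).1 hH, hvH⟩)).1 hv).2.1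
  refine ⟨l + n, stall X B a t n, ⟨hP', hgood, hcard, e3, by omega⟩, fun C hC => ?_⟩
  have hdisj : ∀ v ∈ C, v ∉ B := by
    rcases hC with h' | h' | h'
    · exact hCB C h'.1 fun hin => h'.2 hin.1
    · exact hCB C h'.1.1 fun hin => h'.2.1 ((hin_iff C).2 hin)
    · exact hCB C h'.1.1 fun hin => h'.2.1 ((hin_iff C).2 hin)
  have hstay : ∀ i, t ≤ i → i ≤ t + n → C ∩ stall X B a t n i = C ∩ X t := by
    intro i h1 h2
    ext v
    refine and_congr_right fun hv => ?_
    rw [mem_stall_out (hdisj v hv), fwin i h1 h2]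
  intro i h1 h2
  rw [hstay i (by omega) (by omega), hstay _ (by omega) (by omega)]

/-- if an `I`-connected path decomposition of width at most `k-1` is
`S`-structured and `β(S,P) < α(S',P)`, then there is an `I`-connected path
decomposition of no larger width that is both `S`- and `S'`-structured, with
`β(S,P') < α(S',P')`. -/
theorem stmt18 [Fintype V] (k : ℕ) (hk : 1 ≤ k) (G : SimpleGraph V) (I : Set V)
    (l : ℕ) (X : ℕ → Set V) (hP : IsPathDecomp G l X) (hIc : IsIConn G l X I)
    (hw : pdWidth l X ≤ k - 1)
    (S S' : Set V) (hS : IsBottleneck G k S) (hS' : IsBottleneck G k S')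
    (hstr : IsStructured G l X S)
    (hlt : botEnd G l X S < botStart G l X S') :
    ∃ (l' : ℕ) (X' : ℕ → Set V),
      IsPathDecomp G l' X' ∧ IsIConn G l' X' I ∧
      pdWidth l' X' ≤ pdWidth l X ∧
      IsStructured G l' X' S ∧ IsStructured G l' X' S' ∧
      botEnd G l' X' S < botStart G l' X' S' := by
  set w := (Finset.range l).sup fun i => (X i).ncard with hwdef
  have hwk : w ≤ k := by
    have : w - 1 ≤ k - 1 := hw
    omega
  have hadm : Admissible G I w S S' l X :=
    ⟨hP, fun i hi => igood_iff.2 (hIc i hi), fun i hi =>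
      Finset.le_sup (f := fun i => (X i).ncard) (Finset.mem_range.2 hi), hstr, hlt⟩
  obtain ⟨l₁, X₁, h₁, hpre⟩ := exists_refinement hwk hS hS' _ l X hadm le_rfl
  obtain ⟨l₂, X₂, h₂, hstr₂⟩ := exists_structured hwk h₁ hS hS' hpre
  refine ⟨l₂, X₂, h₂.pd, fun i hi => igood_iff.1 (h₂.good i hi), ?_, h₂.str, hstr₂, h₂.lt⟩
  exact Nat.sub_le_sub_right
    (Finset.sup_le fun i hi => h₂.card i (Finset.mem_range.1 hi)) 1
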